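/- Let n, m, r, k be natural numbers and let M and N be n×m real matrices with all entries in {0,1} such that every row of M and every row of N sums to r, and every column of M and every column of N sums to k (so M and N are incidence matrices of k-uniform r-regular hypergraphs on n vertices with m hyperedges). Then M ≡ N. -/

import Mathlib

/-!
The uniform matrices `S₁ = J / n` and `S₂ = J / m` witness the fractional isomorphism: each of the
four products is constant, with value `k / n` or `r / m`, and these two numbers agree because
counting incidences by rows and by columns gives `n * r = m * k`.
-/

open Matrix

/-- A real square matrix is doubly stochastic if all its entries are nonnegative and
each of its rows and each of its columns sums to 1. -/
def DoublyStochastic {n : Type*} [Fintype n] (S : Matrix n n ℝ) : Prop :=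
  (∀ i j, 0 ≤ S i j) ∧ (∀ i, ∑ j, S i j = 1) ∧ (∀ j, ∑ i, S i j = 1)

/-- Fractional isomorphism of hypergraphs given by their incidence matrices. -/
def FracIso {n m : Type*} [Fintype n] [Fintype m] (M N : Matrix n m ℝ) : Prop :=
  ∃ (S₁ : Matrix n n ℝ) (S₂ : Matrix m m ℝ),
    DoublyStochastic S₁ ∧ DoublyStochastic S₂ ∧
    S₁ * M = N * S₂ᵀ ∧ M * S₂ = S₁ᵀ * N

/-- The all-ones matrix scaled by `1 / n` is doubly stochastic. For `n = 0` this holds vacuously: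
there are no rows, so the junk value `0⁻¹ = 0` is never seen. -/
lemma doublyStochastic_uniform (n : ℕ) :
    DoublyStochastic (Matrix.of fun _ _ : Fin n => (n : ℝ)⁻¹) := by
  have key : ∀ _ : Fin n, ∑ _j : Fin n, (n : ℝ)⁻¹ = 1 := fun i => by
    have hn : (n : ℝ) ≠ 0 := Nat.cast_ne_zero.2 (Fin.pos i).ne'
    simp [hn]
  exact ⟨fun _ _ => by simp, key, key⟩

theorem uniform_regular_hypergraphs_frac_iso (n m r k : ℕ)
    (M N : Matrix (Fin n) (Fin m) ℝ)
    (hM01 : ∀ i j, M i j = 0 ∨ M i j = 1) (hN01 : ∀ i j, N i j = 0 ∨ N i j = 1)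
    (hMrow : ∀ i, ∑ j, M i j = r) (hNrow : ∀ i, ∑ j, N i j = r)
    (hMcol : ∀ j, ∑ i, M i j = k) (hNcol : ∀ j, ∑ i, N i j = k) :
    FracIso M N := by
  have hcount : (n : ℝ) * r = m * k := by
    have h := Finset.sum_comm (s := Finset.univ) (t := Finset.univ) (f := fun i j => M i j)
    simpa [hMrow, hMcol] using h
  -- An index pair `(i, j)` guarantees `n, m ≠ 0`, so the division is legitimate.
  have hval : ∀ (_ : Fin n) (_ : Fin m), (n : ℝ)⁻¹ * k = r * (m : ℝ)⁻¹ := fun i j => by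
    have hn : (n : ℝ) ≠ 0 := Nat.cast_ne_zero.2 (Fin.pos i).ne'
    have hm : (m : ℝ) ≠ 0 := Nat.cast_ne_zero.2 (Fin.pos j).ne'
    field_simp
    linarith
  refine ⟨_, _, doublyStochastic_uniform n, doublyStochastic_uniform m, ?_, ?_⟩
  · ext i j
    simp only [Matrix.mul_apply, Matrix.transpose_apply, Matrix.of_apply, ← Finset.mul_sum,
      ← Finset.sum_mul, hMcol, hNrow]
    exact hval i j
  · ext i j
    simp only [Matrix.mul_apply, Matrix.transpose_apply, Matrix.of_apply, ← Finset.mul_sum,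
      ← Finset.sum_mul, hNcol, hMrow]
    exact (hval i j).symm
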